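/- (i) There are exactly 15120 two-element sets of pairwise orthogonal roots, and the Weyl group W acts transitively on them. (ii) There are exactly 302400 three-element sets of pairwise orthogonal roots, and W acts transitively on them. (iii) There are exactly 1965600 four-element sets of pairwise orthogonal roots, and they form exactly two W-orbits: one of size 151200, consisting of those sets whose elements sum to a vector in 2Λ, and one of size 1814400, consisting of those sets whose elements sum to a vector not in 2Λ. -/

import Mathlib

noncomputable section

/-- The standard dot product on ℝ^8. -/
def dot (a b : Fin 8 → ℝ) : ℝ := ∑ i, a i * b i

/-- Membership in the E8 lattice Λ: all coordinates are integers or all lie in ℤ + 1/2,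
and the coordinates sum to an even integer. -/
def inLambda (a : Fin 8 → ℝ) : Prop :=
  ((∀ i, ∃ n : ℤ, a i = n) ∨ (∀ i, ∃ n : ℤ, a i = n + 1 / 2)) ∧
    ∃ n : ℤ, (∑ i, a i) = 2 * n

/-- The E8 root system E: lattice vectors of squared norm 2. -/
def isRoot (a : Fin 8 → ℝ) : Prop := inLambda a ∧ dot a a = 2

/-- The Weyl group W: linear isometries of ℝ^8 mapping the root system E onto itself. -/
def IsWeyl (w : (Fin 8 → ℝ) ≃ₗ[ℝ] (Fin 8 → ℝ)) : Prop :=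
  (∀ a b : Fin 8 → ℝ, dot (w a) (w b) = dot a b) ∧
    (⇑w '' {a | isRoot a} = {a | isRoot a})

/-- A `k`-element set of pairwise orthogonal roots. -/
def OrthSet (k : ℕ) (K : Finset (Fin 8 → ℝ)) : Prop :=
  K.card = k ∧ (∀ e ∈ K, isRoot e) ∧ ∀ e ∈ K, ∀ f ∈ K, e ≠ f → dot e f = 0

/-- The elements of `K` sum to a vector in `2Λ`. -/
def SumInTwoLambda (K : Finset (Fin 8 → ℝ)) : Prop :=
  ∃ x, inLambda x ∧ (∑ e ∈ K, e) = (2 : ℝ) • x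

/-!
Grow an orthogonal set of roots one root at a time along the frame
`e₀ + e₁, e₀ - e₁, e₂ + e₃, …`. If `P` is an orthogonal set, two non-orthogonal roots of `P^⊥` are
exchanged, up to sign, by a reflection in a root of `P^⊥`, hence by an element of `W` fixing `P`.
For the initial segments `P` of the frame with at most two elements, the next root `t` of the frame
is such that the roots of `P^⊥` that are not orthogonal to `t` span `P^⊥`. So every root of `P^⊥`
is joined to `t` by at most two such steps, the pointwise stabiliser of `P` is transitive on the
roots of `P^⊥`, and `W` is transitive on the orthogonal sets with one root more.

For three roots `P^⊥` has root system `D₄ + A₁`. The two roots `±(e₂ - e₃)` of the summand `A₁`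
complete `P` to a set with sum in `2Λ`, and the 24 roots of `D₄`, which are again joined to each
other, complete it to one with sum outside `2Λ`.

If `W` is transitive on the orthogonal `k`-sets, double counting the pairs formed by such a set and
a larger one with `k + 1` elements reduces the count of the latter to the number of roots
orthogonal to `P`. These numbers are 240, 126, 60 and `26 = 2 + 24` for `k = 0, 1, 2, 3`.
-/

open Finset MulAction
open scoped Pointwise

section DoubleCounting

variable {α : Type*} [DecidableEq α] {𝒜 ℬ : Set (Finset α)} {k : ℕ}

theorem ncard_setOf_subset_of_card_eq_succ (hℬ : ∀ L ∈ ℬ, #L = k + 1) {K : Finset α} (hK : #K = k) :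
    {L ∈ ℬ | K ⊆ L}.ncard = {x | x ∉ K ∧ insert x K ∈ ℬ}.ncard := by
  have insert_injOn : Set.InjOn (insert · K) {x | x ∉ K ∧ insert x K ∈ ℬ} :=
    fun x hx y _ hxy => (insert_inj hx.1).1 hxy
  rw [← insert_injOn.ncard_image]
  congr 1
  ext L
  constructor
  · rintro ⟨hL, hKL⟩
    obtain ⟨x, hx⟩ : ∃ x, L \ K = {x} := by
      rw [← card_eq_one, card_sdiff_of_subset hKL, hℬ L hL, hK, Nat.add_sub_cancel_left]
    have insert_eq : insert x K = L := by
      rw [← sdiff_union_of_subset hKL, hx, insert_eq]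
    exact ⟨x, ⟨fun hxK => by grind, insert_eq ▸ hL⟩, insert_eq⟩
  · rintro ⟨x, hx, rfl⟩
    exact ⟨hx.2, subset_insert x K⟩

theorem ncard_mul_eq_ncard_mul_succ (h𝒜fin : 𝒜.Finite) (hℬfin : ℬ.Finite)
    (h𝒜 : ∀ K ∈ 𝒜, #K = k) (hℬ : ∀ L ∈ ℬ, #L = k + 1)
    (hsub : ∀ L ∈ ℬ, ∀ K ⊆ L, #K = k → K ∈ 𝒜) {c : ℕ}
    (hins : ∀ K ∈ 𝒜, {x | x ∉ K ∧ insert x K ∈ ℬ}.ncard = c) :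
    𝒜.ncard * c = ℬ.ncard * (k + 1) := by
  classical
  rw [Set.ncard_eq_toFinset_card 𝒜 h𝒜fin, Set.ncard_eq_toFinset_card ℬ hℬfin]
  refine card_mul_eq_card_mul (· ⊆ ·) (fun K hK => ?_) fun L hL => ?_
  · rw [h𝒜fin.mem_toFinset] at hK
    rw [← hins K hK, ← ncard_setOf_subset_of_card_eq_succ hℬ (h𝒜 K hK),
      ← Set.ncard_coe_finset]
    simp [bipartiteAbove]
  · rw [hℬfin.mem_toFinset] at hL
    have below_eq : h𝒜fin.toFinset.bipartiteBelow (· ⊆ ·) L = powersetCard k L := by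
      ext K
      simp only [mem_bipartiteBelow, h𝒜fin.mem_toFinset, mem_powersetCard]
      exact ⟨fun h => ⟨h.2, h𝒜 K h.1⟩, fun h => ⟨hsub L hL K h.1 h.2, h.1⟩⟩
    rw [below_eq, card_powersetCard, hℬ L hL, Nat.choose_succ_self_right]

end DoubleCounting

theorem dot_eq_dotProduct (a b : Fin 8 → ℝ) : dot a b = a ⬝ᵥ b := rfl

theorem isRoot.dotProduct_self {a : Fin 8 → ℝ} (ha : isRoot a) : a ⬝ᵥ a = 2 := ha.2

theorem isRoot.ne_zero {a : Fin 8 → ℝ} (ha : isRoot a) : a ≠ 0 := by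
  rintro rfl
  simpa using ha.dotProduct_self

section Halve

/-- The vector `v / 2`. Vectors of `Λ` are handled through their doubles, whose coordinates are
integers. -/
def halve (v : Fin 8 → ℤ) : Fin 8 → ℝ := fun i => v i / 2

theorem halve_injective : Function.Injective halve := fun v w h => by
  funext i
  simpa [halve] using congrFun h i

theorem halve_add (v w : Fin 8 → ℤ) : halve (v + w) = halve v + halve w := by
  funext i
  simp [halve, add_div]

theorem halve_neg (v : Fin 8 → ℤ) : halve (-v) = -halve v := by
  funext i
  simp [halve, neg_div]

theorem halve_dotProduct_halve (v w : Fin 8 → ℤ) :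
    halve v ⬝ᵥ halve w = ((v ⬝ᵥ w : ℤ) : ℝ) / 4 := by
  simp only [dotProduct, halve, Int.cast_sum, Int.cast_mul, sum_div]
  exact sum_congr rfl fun i _ => by ring

theorem sum_halve (v : Fin 8 → ℤ) : ∑ i, halve v i = ((∑ i, v i : ℤ) : ℝ) / 2 := by
  simp only [halve, Int.cast_sum, sum_div]

theorem halve_apply_eq_zero_iff {v : Fin 8 → ℤ} {i : Fin 8} : halve v i = 0 ↔ v i = 0 := by
  simp [halve]

theorem halve_apply_eq_halve_apply_iff {v : Fin 8 → ℤ} {i j : Fin 8} :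
    halve v i = halve v j ↔ v i = v j := by
  simp [halve]

theorem halve_apply_add_halve_apply_eq_zero_iff {v : Fin 8 → ℤ} {i j : Fin 8} :
    halve v i + halve v j = 0 ↔ v i + v j = 0 := by
  simp only [halve, ← add_div, div_eq_zero_iff, OfNat.ofNat_ne_zero, or_false]
  norm_cast

/-- The integer vectors that are twice a vector of `Λ`. -/
def IsDoubleOfLambda (v : Fin 8 → ℤ) : Prop :=
  (∃ ε, ∀ i, v i ≡ ε [ZMOD 2]) ∧ 4 ∣ ∑ i, v i

theorem inLambda_halve {v : Fin 8 → ℤ} (hv : IsDoubleOfLambda v) : inLambda (halve v) := by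
  obtain ⟨⟨ε, hε⟩, m, hm⟩ := hv
  refine ⟨?_, m, by rw [sum_halve, hm]; push_cast; ring⟩
  rcases Int.even_or_odd ε with hpar | hpar
  · refine .inl fun i => ?_
    obtain ⟨n, hn⟩ : Even (v i) := by grind [Int.ModEq]
    exact ⟨n, by simp only [halve, hn]; push_cast; ring⟩
  · refine .inr fun i => ?_
    obtain ⟨n, hn⟩ : Odd (v i) := by grind [Int.ModEq]
    exact ⟨n, by simp only [halve, hn]; push_cast; ring⟩

theorem inLambda.exists_halve {x : Fin 8 → ℝ} (hx : inLambda x) :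
    ∃ v, IsDoubleOfLambda v ∧ halve v = x := by
  obtain ⟨v, ⟨ε, hε⟩, rfl⟩ : ∃ v, (∃ ε, ∀ i, v i ≡ ε [ZMOD 2]) ∧ halve v = x := by
    rcases hx.1 with h | h <;> choose n hn using h
    · exact ⟨fun i => 2 * n i, ⟨0, fun i => by simp [Int.ModEq]⟩, by funext i; simp [halve, hn]⟩
    · refine ⟨fun i => 2 * n i + 1, ⟨1, fun i => by simp [Int.ModEq]⟩, ?_⟩
      funext i
      simp only [halve, hn]
      push_cast
      ring
  obtain ⟨m, hm⟩ := hx.2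
  rw [sum_halve] at hm
  exact ⟨v, ⟨⟨ε, hε⟩, m, by exact_mod_cast (by linarith : ((∑ i, v i : ℤ) : ℝ) = 4 * m)⟩, rfl⟩

theorem inLambda_iff_exists_halve {x : Fin 8 → ℝ} :
    inLambda x ↔ ∃ v, IsDoubleOfLambda v ∧ halve v = x :=
  ⟨inLambda.exists_halve, by rintro ⟨v, hv, rfl⟩; exact inLambda_halve hv⟩

theorem isRoot_halve_iff {v : Fin 8 → ℤ} :
    isRoot (halve v) ↔ IsDoubleOfLambda v ∧ v ⬝ᵥ v = 8 := by
  have norm_iff : dot (halve v) (halve v) = 2 ↔ v ⬝ᵥ v = 8 := by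
    rw [dot_eq_dotProduct, halve_dotProduct_halve, div_eq_iff (by norm_num)]
    norm_num
    norm_cast
  rw [isRoot, norm_iff, inLambda_iff_exists_halve]
  simp only [halve_injective.eq_iff, exists_eq_right]

end Halve

section Lattice

/-- The lattice `Λ` as a subgroup of `ℝ^8`. -/
def e8Lattice : AddSubgroup (Fin 8 → ℝ) where
  carrier := {x | inLambda x}
  zero_mem' := ⟨.inl fun _ => ⟨0, by simp⟩, 0, by simp⟩
  add_mem' := by
    intro x y hx hy
    obtain ⟨v, ⟨⟨ε, hε⟩, hv⟩, rfl⟩ := hx.exists_halve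
    obtain ⟨w, ⟨⟨δ, hδ⟩, hw⟩, rfl⟩ := hy.exists_halve
    have double_add : IsDoubleOfLambda (v + w) :=
      ⟨⟨ε + δ, fun i => (hε i).add (hδ i)⟩, by simpa [sum_add_distrib] using dvd_add hv hw⟩
    exact halve_add v w ▸ inLambda_halve double_add
  neg_mem' := by
    intro x hx
    obtain ⟨v, ⟨⟨ε, hε⟩, hv⟩, rfl⟩ := hx.exists_halve
    have double_neg : IsDoubleOfLambda (-v) :=
      ⟨⟨-ε, fun i => (hε i).neg⟩, by simpa using hv⟩
    exact halve_neg v ▸ inLambda_halve double_neg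

theorem IsDoubleOfLambda.four_dvd_dotProduct {v w : Fin 8 → ℤ} (hv : IsDoubleOfLambda v)
    (hw : IsDoubleOfLambda w) : 4 ∣ v ⬝ᵥ w := by
  obtain ⟨⟨ε, hε⟩, hv⟩ := hv
  obtain ⟨⟨δ, hδ⟩, hw⟩ := hw
  have dvd_shifted : 4 ∣ ∑ i, (v i - ε) * (w i - δ) :=
    dvd_sum fun i _ => mul_dvd_mul (hε i).symm.dvd (hδ i).symm.dvd
  have expand : v ⬝ᵥ w =
      ∑ i, (v i - ε) * (w i - δ) + δ * ∑ i, v i + ε * ∑ i, w i - 4 * (2 * ε * δ) := by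
    simp only [dotProduct, sub_mul, mul_sub, sum_sub_distrib, ← sum_mul, ← mul_sum, sum_const,
      card_univ, Fintype.card_fin]
    ring
  rw [expand]
  exact (((dvd_shifted.add (hv.mul_left δ)).add (hw.mul_left ε)).sub (dvd_mul_right 4 _))

theorem inLambda.exists_dotProduct_eq_intCast {x y : Fin 8 → ℝ} (hx : inLambda x)
    (hy : inLambda y) : ∃ n : ℤ, x ⬝ᵥ y = n := by
  obtain ⟨v, hv, rfl⟩ := hx.exists_halve
  obtain ⟨w, hw, rfl⟩ := hy.exists_halve
  obtain ⟨n, hn⟩ := hv.four_dvd_dotProduct hw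
  exact ⟨n, by rw [halve_dotProduct_halve, hn]; push_cast; ring⟩

/-- The vector `eᵢ + eⱼ`, a root for `i ≠ j`. -/
def addRoot (i j : Fin 8) : Fin 8 → ℝ := Pi.single i 1 + Pi.single j 1

/-- The vector `eᵢ - eⱼ`, a root for `i ≠ j`. -/
def subRoot (i j : Fin 8) : Fin 8 → ℝ := Pi.single i 1 - Pi.single j 1

/-- The root all of whose coordinates are `1 / 2`. -/
def halfRoot : Fin 8 → ℝ := fun _ => 1 / 2

theorem addRoot_dotProduct (i j : Fin 8) (x : Fin 8 → ℝ) : addRoot i j ⬝ᵥ x = x i + x j := by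
  simp [addRoot, add_dotProduct]

theorem subRoot_dotProduct (i j : Fin 8) (x : Fin 8 → ℝ) : subRoot i j ⬝ᵥ x = x i - x j := by
  simp [subRoot, sub_dotProduct]

theorem halfRoot_dotProduct (x : Fin 8 → ℝ) : halfRoot ⬝ᵥ x = (∑ i, x i) / 2 := by
  simp [halfRoot, dotProduct, ← mul_sum, div_eq_inv_mul]

theorem isRoot_addRoot {i j : Fin 8} (h : i ≠ j) : isRoot (addRoot i j) := by
  refine ⟨⟨.inl fun k => ⟨(Pi.single i 1 + Pi.single j 1 : Fin 8 → ℤ) k, ?_⟩, 1, ?_⟩, ?_⟩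
  · simp [addRoot, Pi.single_apply]
  · norm_num [addRoot, sum_add_distrib]
  · norm_num [dot_eq_dotProduct, addRoot_dotProduct, addRoot, h, h.symm]

theorem isRoot_subRoot {i j : Fin 8} (h : i ≠ j) : isRoot (subRoot i j) := by
  refine ⟨⟨.inl fun k => ⟨(Pi.single i 1 - Pi.single j 1 : Fin 8 → ℤ) k, ?_⟩, 0, ?_⟩, ?_⟩
  · simp [subRoot, Pi.single_apply]
  · simp [subRoot]
  · norm_num [dot_eq_dotProduct, subRoot_dotProduct, subRoot, h, h.symm]

theorem isRoot_halfRoot : isRoot halfRoot :=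
  ⟨⟨.inr fun _ => ⟨0, by simp [halfRoot]⟩, 2, by norm_num [halfRoot]⟩, by norm_num [dot, halfRoot]⟩

theorem isRoot_halfRoot_sub_addRoot {i j : Fin 8} (h : i ≠ j) :
    isRoot (halfRoot - addRoot i j) := by
  refine ⟨e8Lattice.sub_mem isRoot_halfRoot.1 (isRoot_addRoot h).1, ?_⟩
  rw [dot_eq_dotProduct, sub_dotProduct, addRoot_dotProduct, halfRoot_dotProduct]
  norm_num [addRoot, halfRoot, sum_add_distrib, h, h.symm]

-- Integrality against `e₀ ± e₁` makes `2 x₀` an integer, integrality against `eᵢ - e₀` then makes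
-- each `2 xᵢ` an integer of the same parity, and `halfRoot` controls the sum of the coordinates.
theorem inLambda_iff_forall_isRoot {x : Fin 8 → ℝ} :
    inLambda x ↔ ∀ r, isRoot r → ∃ n : ℤ, r ⬝ᵥ x = n := by
  refine ⟨fun hx r hr => hr.1.exists_dotProduct_eq_intCast hx, fun hx => ?_⟩
  have add_int (i j : Fin 8) (h : i ≠ j) : ∃ n : ℤ, x i + x j = n := by
    simpa only [addRoot_dotProduct] using hx _ (isRoot_addRoot h)
  have sub_int (i j : Fin 8) : ∃ n : ℤ, x i - x j = n := by
    by_cases h : i = j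
    · exact ⟨0, by simp [h]⟩
    · simpa only [subRoot_dotProduct] using hx _ (isRoot_subRoot h)
  obtain ⟨p, hp⟩ := add_int 0 1 (by decide)
  obtain ⟨q, hq⟩ := sub_int 0 1
  choose d hd using fun i => sub_int i 0
  obtain ⟨m, hm⟩ := hx _ isRoot_halfRoot
  rw [halfRoot_dotProduct] at hm
  have coord (i : Fin 8) : x i = ((2 * d i + (p + q) : ℤ) : ℝ) / 2 := by
    push_cast
    linarith [hd i]
  refine inLambda_iff_exists_halve.2
    ⟨fun i => 2 * d i + (p + q), ⟨⟨p + q, fun i => by simp [Int.ModEq]⟩, m, ?_⟩, ?_⟩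
  · have sum_eq : ∑ i, x i = ((∑ i, (2 * d i + (p + q)) : ℤ) : ℝ) / 2 := by
      rw [Int.cast_sum, sum_div]
      exact sum_congr rfl fun i _ => coord i
    exact_mod_cast (by linarith : ((∑ i, (2 * d i + (p + q)) : ℤ) : ℝ) = 4 * m)
  · exact funext fun i => (coord i).symm

end Lattice

section DoubledRoots

/-- The integer vectors whose coordinates are `±c` on `s` and `0` off `s`. -/
def signVectors (c : ℤ) (s : Finset (Fin 8)) : Finset (Fin 8 → ℤ) :=
  Fintype.piFinset fun i => if i ∈ s then {-c, c} else {0}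

theorem mem_signVectors {c : ℤ} {s : Finset (Fin 8)} {v : Fin 8 → ℤ} :
    v ∈ signVectors c s ↔ ∀ i, if i ∈ s then v i = -c ∨ v i = c else v i = 0 := by
  simp only [signVectors, Fintype.mem_piFinset]
  exact forall_congr' fun i => by split_ifs <;> simp

theorem mem_iff_ne_zero_of_mem_signVectors {c : ℤ} (hc : c ≠ 0) {s : Finset (Fin 8)}
    {v : Fin 8 → ℤ} (hv : v ∈ signVectors c s) {i : Fin 8} : i ∈ s ↔ v i ≠ 0 := by
  have := mem_signVectors.1 hv i
  grind

theorem pairwiseDisjoint_signVectors {c : ℤ} (hc : c ≠ 0) (S : Set (Finset (Fin 8))) :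
    S.PairwiseDisjoint (signVectors c) := by
  intro s _ t _ hst
  refine disjoint_left.2 fun v hvs hvt => hst ?_
  ext i
  rw [mem_iff_ne_zero_of_mem_signVectors hc hvs, mem_iff_ne_zero_of_mem_signVectors hc hvt]

/-- The doubles of the roots with integer coordinates. -/
def evenDoubledRoots : Finset (Fin 8 → ℤ) :=
  (powersetCard 2 univ).disjiUnion (signVectors 2) (pairwiseDisjoint_signVectors two_ne_zero _)

/-- The doubles of the roots with coordinates in `ℤ + 1 / 2`. -/
def oddDoubledRoots : Finset (Fin 8 → ℤ) := {v ∈ signVectors 1 univ | 4 ∣ ∑ i, v i}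

theorem mem_evenDoubledRoots {v : Fin 8 → ℤ} :
    v ∈ evenDoubledRoots ↔ (∀ i, v i = -2 ∨ v i = 0 ∨ v i = 2) ∧ #{i | v i ≠ 0} = 2 := by
  simp only [evenDoubledRoots, mem_disjiUnion, mem_powersetCard_univ]
  constructor
  · rintro ⟨s, hs, hv⟩
    have supp_eq : s = ({i | v i ≠ 0} : Finset (Fin 8)) := by
      ext i; simp [mem_iff_ne_zero_of_mem_signVectors two_ne_zero hv]
    refine ⟨fun i => ?_, supp_eq ▸ hs⟩
    have := mem_signVectors.1 hv i
    grind
  · rintro ⟨hv, hcard⟩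
    exact ⟨_, hcard, mem_signVectors.2 fun i => by grind⟩

theorem mem_oddDoubledRoots {v : Fin 8 → ℤ} :
    v ∈ oddDoubledRoots ↔ (∀ i, v i = -1 ∨ v i = 1) ∧ 4 ∣ ∑ i, v i := by
  simp [oddDoubledRoots, mem_signVectors]

theorem disjoint_evenDoubledRoots_oddDoubledRoots :
    Disjoint evenDoubledRoots oddDoubledRoots := by
  refine disjoint_left.2 fun v heven hodd => ?_
  have := (mem_evenDoubledRoots.1 heven).1 0
  have := (mem_oddDoubledRoots.1 hodd).1 0
  omega

/-- The doubles of all the roots, in a form that can be enumerated. -/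
def doubledRoots : Finset (Fin 8 → ℤ) :=
  evenDoubledRoots.disjUnion oddDoubledRoots disjoint_evenDoubledRoots_oddDoubledRoots

theorem dotProduct_self_eq_four_mul_card {v : Fin 8 → ℤ}
    (hv : ∀ i, v i = -2 ∨ v i = 0 ∨ v i = 2) : v ⬝ᵥ v = 4 * #{i | v i ≠ 0} := by
  rw [dotProduct, card_filter, Nat.cast_sum, mul_sum]
  exact sum_congr rfl fun i _ => by rcases hv i with h | h | h <;> simp [h]

theorem eight_dvd_dotProduct_self_sub_two_mul_sum {v : Fin 8 → ℤ}
    (hv : ∀ i, v i = -2 ∨ v i = 0 ∨ v i = 2) : 8 ∣ v ⬝ᵥ v - 2 * ∑ i, v i := by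
  rw [dotProduct, mul_sum, ← sum_sub_distrib]
  exact dvd_sum fun i _ => by rcases hv i with h | h | h <;> norm_num [h]

theorem mem_doubledRoots {v : Fin 8 → ℤ} :
    v ∈ doubledRoots ↔ IsDoubleOfLambda v ∧ v ⬝ᵥ v = 8 := by
  rw [doubledRoots, mem_disjUnion, mem_evenDoubledRoots, mem_oddDoubledRoots]
  constructor
  · rintro (⟨hv, hcard⟩ | ⟨hv, hsum⟩)
    · have norm_eq : v ⬝ᵥ v = 8 := by rw [dotProduct_self_eq_four_mul_card hv, hcard]; rfl
      have := eight_dvd_dotProduct_self_sub_two_mul_sum hv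
      exact ⟨⟨⟨0, fun i => by have := hv i; grind [Int.ModEq]⟩, by omega⟩, norm_eq⟩
    · refine ⟨⟨⟨1, fun i => by have := hv i; grind [Int.ModEq]⟩, hsum⟩, ?_⟩
      have sq_eq (i : Fin 8) : v i * v i = 1 := by rcases hv i with h | h <;> simp [h]
      simp [dotProduct, sq_eq]
  · rintro ⟨⟨⟨ε, hε⟩, hsum⟩, hnorm⟩
    have coord_mem (i : Fin 8) : v i ∈ Set.Icc (-2) 2 := by
      have sq_le : v i * v i ≤ 8 := hnorm ▸
        single_le_sum (f := fun i => v i * v i) (fun j _ => mul_self_nonneg (v j)) (mem_univ i)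
      constructor <;> nlinarith
    rcases Int.even_or_odd ε with hpar | hpar
    · have hv (i : Fin 8) : v i = -2 ∨ v i = 0 ∨ v i = 2 := by grind [Int.ModEq]
      have := dotProduct_self_eq_four_mul_card hv
      exact .inl ⟨hv, by omega⟩
    · exact .inr ⟨fun i => by grind [Int.ModEq], hsum⟩

theorem setOf_isRoot_and_eq_image {p : (Fin 8 → ℝ) → Prop} {q : (Fin 8 → ℤ) → Prop}
    [DecidablePred q] (h : ∀ v, p (halve v) ↔ q v) :
    {a | isRoot a ∧ p a} = halve '' ↑({v ∈ doubledRoots | q v} : Finset (Fin 8 → ℤ)) := by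
  simp only [coe_filter, mem_doubledRoots, ← isRoot_halve_iff, ← h]
  ext a
  constructor
  · rintro ⟨ha, hpa⟩
    obtain ⟨v, -, rfl⟩ := ha.1.exists_halve
    exact ⟨v, ⟨ha, hpa⟩, rfl⟩
  · rintro ⟨v, hv, rfl⟩
    exact hv

theorem ncard_setOf_isRoot_and {p : (Fin 8 → ℝ) → Prop} {q : (Fin 8 → ℤ) → Prop}
    [DecidablePred q] (h : ∀ v, p (halve v) ↔ q v) :
    {a | isRoot a ∧ p a}.ncard = #{v ∈ doubledRoots | q v} := by
  rw [setOf_isRoot_and_eq_image h, Set.ncard_image_of_injective _ halve_injective,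
    Set.ncard_coe_finset]

theorem finite_setOf_isRoot : {a | isRoot a}.Finite := by
  refine (doubledRoots.finite_toSet.image halve).subset fun a ha => ?_
  obtain ⟨v, -, rfl⟩ := ha.1.exists_halve
  exact ⟨v, mem_doubledRoots.2 (isRoot_halve_iff.1 ha), rfl⟩

end DoubledRoots

section WeylGroup

/-- The Weyl group `W` as a subgroup of the linear automorphisms of `ℝ^8`. -/
def weylGroup : Subgroup ((Fin 8 → ℝ) ≃ₗ[ℝ] (Fin 8 → ℝ)) where
  carrier := {w | IsWeyl w}
  one_mem' := ⟨fun _ _ => rfl, Set.image_id _⟩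
  mul_mem' := by
    intro w v hw hv
    refine ⟨fun a b => (hw.1 _ _).trans (hv.1 a b), ?_⟩
    exact (Set.image_comp w v _).trans (by rw [hv.2, hw.2])
  inv_mem' := by
    intro w hw
    refine ⟨fun a b => ?_, ?_⟩
    · rw [← hw.1, LinearEquiv.coe_inv, w.apply_symm_apply, w.apply_symm_apply]
    · conv_lhs => rw [← hw.2]
      exact w.symm_image_image _

theorem smul_dotProduct_smul (w : weylGroup) (a b : Fin 8 → ℝ) :
    (w • a) ⬝ᵥ (w • b) = a ⬝ᵥ b := w.2.1 a b

theorem isRoot_smul_iff (w : weylGroup) {a : Fin 8 → ℝ} : isRoot (w • a) ↔ isRoot a := by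
  have root_smul (v : weylGroup) {b : Fin 8 → ℝ} (hb : isRoot b) : isRoot (v • b) :=
    v.2.2.subset ⟨b, hb, rfl⟩
  exact ⟨fun h => by simpa using root_smul w⁻¹ h, root_smul w⟩

theorem inLambda.smul {x : Fin 8 → ℝ} (hx : inLambda x) (w : weylGroup) : inLambda (w • x) := by
  rw [inLambda_iff_forall_isRoot] at hx ⊢
  intro r hr
  obtain ⟨n, hn⟩ := hx (w⁻¹ • r) ((isRoot_smul_iff w⁻¹).2 hr)
  exact ⟨n, by rw [← hn, ← smul_dotProduct_smul w (w⁻¹ • r), smul_inv_smul]⟩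

theorem OrthSet.smul {k : ℕ} {K : Finset (Fin 8 → ℝ)} (hK : OrthSet k K) (w : weylGroup) :
    OrthSet k (w • K) := by
  refine ⟨by rw [card_smul_finset, hK.1], fun e he => ?_, fun e he f hf hef => ?_⟩
  · obtain ⟨a, ha, rfl⟩ := mem_smul_finset.1 he
    exact (isRoot_smul_iff w).2 (hK.2.1 a ha)
  · obtain ⟨a, ha, rfl⟩ := mem_smul_finset.1 he
    obtain ⟨b, hb, rfl⟩ := mem_smul_finset.1 hf
    exact (smul_dotProduct_smul w a b).trans (hK.2.2 a ha b hb (ne_of_apply_ne _ hef))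

theorem SumInTwoLambda.smul {K : Finset (Fin 8 → ℝ)} (hK : SumInTwoLambda K) (w : weylGroup) :
    SumInTwoLambda (w • K) := by
  obtain ⟨x, hx, hsum⟩ := hK
  refine ⟨w • x, hx.smul w, ?_⟩
  have sum_smul : ∑ e ∈ w • K, e = w • ∑ e ∈ K, e := by
    rw [smul_finset_def, sum_image (MulAction.injective w).injOn, smul_sum]
  rw [sum_smul, hsum, smul_comm]

theorem sumInTwoLambda_smul_iff (w : weylGroup) (K : Finset (Fin 8 → ℝ)) :
    SumInTwoLambda (w • K) ↔ SumInTwoLambda K :=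
  ⟨fun h => by simpa using h.smul w⁻¹, fun h => h.smul w⟩

theorem sumInTwoLambda_iff_of_mem_orbit {K L : Finset (Fin 8 → ℝ)}
    (h : L ∈ orbit weylGroup K) : SumInTwoLambda L ↔ SumInTwoLambda K := by
  obtain ⟨w, rfl⟩ := h
  exact sumInTwoLambda_smul_iff w K

theorem exists_isWeyl_image_eq_iff {K L : Finset (Fin 8 → ℝ)} :
    (∃ w : (Fin 8 → ℝ) ≃ₗ[ℝ] (Fin 8 → ℝ), IsWeyl w ∧ ⇑w '' (K : Set (Fin 8 → ℝ)) = L) ↔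
      L ∈ orbit weylGroup K := by
  have smul_eq_iff (w : weylGroup) : w • K = L ↔ ⇑w.1 '' (K : Set (Fin 8 → ℝ)) = L := by
    rw [← coe_inj, coe_smul_finset]
    rfl
  constructor
  · rintro ⟨w, hw, h⟩
    exact ⟨⟨w, hw⟩, (smul_eq_iff ⟨w, hw⟩).2 h⟩
  · rintro ⟨w, h⟩
    exact ⟨w.1, w.2, (smul_eq_iff w).1 h⟩

end WeylGroup

section OrthRoots

variable {P : Finset (Fin 8 → ℝ)} {a b r : Fin 8 → ℝ}

/-- The roots orthogonal to every element of `P`. -/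
def orthRoots (P : Finset (Fin 8 → ℝ)) : Set (Fin 8 → ℝ) :=
  {a | isRoot a ∧ ∀ p ∈ P, p ⬝ᵥ a = 0}

theorem notMem_of_mem_orthRoots (ha : a ∈ orthRoots P) : a ∉ P := fun haP =>
  two_ne_zero (ha.1.dotProduct_self.symm.trans (ha.2 a haP))

theorem smul_mem_orthRoots_smul_iff (w : weylGroup) :
    w • a ∈ orthRoots (w • P) ↔ a ∈ orthRoots P := by
  refine and_congr (isRoot_smul_iff w) ⟨fun h p hp => ?_, fun h p hp => ?_⟩
  · rw [← smul_dotProduct_smul w]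
    exact h _ (smul_mem_smul_finset hp)
  · obtain ⟨q, hq, rfl⟩ := mem_smul_finset.1 hp
    rw [smul_dotProduct_smul w]
    exact h q hq

/-- The reflection `x ↦ x - (r · x) r` in a root `r`. -/
def rootReflection (hr : isRoot r) : (Fin 8 → ℝ) ≃ₗ[ℝ] (Fin 8 → ℝ) :=
  Module.reflection (x := r) (f := dotProductEquiv ℝ (Fin 8) r) hr.dotProduct_self

theorem rootReflection_apply (hr : isRoot r) (x : Fin 8 → ℝ) :
    rootReflection hr x = x - (r ⬝ᵥ x) • r := Module.reflection_apply x _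

theorem isWeyl_rootReflection (hr : isRoot r) : IsWeyl (rootReflection hr) := by
  have dot_eq (x y : Fin 8 → ℝ) :
      rootReflection hr x ⬝ᵥ rootReflection hr y = x ⬝ᵥ y := by
    simp only [rootReflection_apply, sub_dotProduct, dotProduct_sub, smul_dotProduct,
      dotProduct_smul, smul_eq_mul, hr.dotProduct_self, dotProduct_comm x r]
    ring
  have root_map {a : Fin 8 → ℝ} (ha : isRoot a) : isRoot (rootReflection hr a) := by
    refine ⟨?_, (dot_eq a a).trans ha.2⟩
    obtain ⟨n, hn⟩ := hr.1.exists_dotProduct_eq_intCast ha.1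
    rw [rootReflection_apply, hn, Int.cast_smul_eq_zsmul]
    exact e8Lattice.sub_mem ha.1 (e8Lattice.zsmul_mem hr.1 n)
  refine ⟨dot_eq, Set.Subset.antisymm ?_ fun a ha => ?_⟩
  · rintro _ ⟨a, ha, rfl⟩
    exact root_map ha
  · exact ⟨_, root_map ha, Module.involutive_reflection _ a⟩

theorem sub_smul_mem_orbit_fixingSubgroup (hr : r ∈ orthRoots P) (a : Fin 8 → ℝ) :
    a - (r ⬝ᵥ a) • r ∈ orbit (fixingSubgroup weylGroup (P : Set (Fin 8 → ℝ))) a := by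
  refine ⟨⟨⟨rootReflection hr.1, isWeyl_rootReflection hr.1⟩, ?_⟩, rootReflection_apply hr.1 a⟩
  refine (mem_fixingSubgroup_iff _).2 fun p hp => (rootReflection_apply hr.1 p).trans ?_
  rw [dotProduct_comm, hr.2 p hp, zero_smul, sub_zero]

theorem mem_orbit_fixingSubgroup_of_dotProduct_pos (ha : a ∈ orthRoots P) (hb : b ∈ orthRoots P)
    (hab : 0 < a ⬝ᵥ b) : b ∈ orbit (fixingSubgroup weylGroup (P : Set (Fin 8 → ℝ))) a := by
  obtain ⟨n, hn⟩ := ha.1.1.exists_dotProduct_eq_intCast hb.1.1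
  have norm_sub : (a - b) ⬝ᵥ (a - b) = 4 - 2 * n := by
    simp only [sub_dotProduct, dotProduct_sub, ha.1.dotProduct_self, hb.1.dotProduct_self,
      dotProduct_comm b a, hn]
    ring
  have n_pos : 0 < n := by rw [hn] at hab; exact_mod_cast hab
  have n_le : n ≤ 2 := by
    have : 0 ≤ (a - b) ⬝ᵥ (a - b) := sum_nonneg fun _ _ => mul_self_nonneg _
    exact_mod_cast (by linarith : (n : ℝ) ≤ 2)
  obtain rfl | rfl : n = 1 ∨ n = 2 := by omega
  · have sub_mem : a - b ∈ orthRoots P :=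
      ⟨⟨e8Lattice.sub_mem ha.1.1 hb.1.1, norm_sub.trans (by norm_num)⟩, fun p hp => by
        rw [dotProduct_sub, ha.2 p hp, hb.2 p hp, sub_zero]⟩
    convert sub_smul_mem_orbit_fixingSubgroup sub_mem a using 1
    rw [sub_dotProduct, ha.1.dotProduct_self, dotProduct_comm, hn]
    norm_num
  · rw [sub_eq_zero.1 (dotProduct_self_eq_zero.1 (norm_sub.trans (by norm_num)))]
    exact mem_orbit_self b

theorem mem_orbit_fixingSubgroup_of_dotProduct_ne_zero (ha : a ∈ orthRoots P)
    (hb : b ∈ orthRoots P) (hab : a ⬝ᵥ b ≠ 0) :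
    b ∈ orbit (fixingSubgroup weylGroup (P : Set (Fin 8 → ℝ))) a := by
  rcases hab.lt_or_gt with hneg | hpos
  · have neg_mem : -b ∈ orthRoots P :=
      ⟨⟨e8Lattice.neg_mem hb.1.1, (by simpa using hb.1.dotProduct_self : -b ⬝ᵥ -b = 2)⟩,
        by simpa using hb.2⟩
    have reflect : b ∈ orbit (fixingSubgroup weylGroup (P : Set (Fin 8 → ℝ))) (-b) := by
      convert sub_smul_mem_orbit_fixingSubgroup hb (-b) using 1
      rw [dotProduct_neg, hb.1.dotProduct_self]
      module
    rw [← orbit_eq_iff.2 (mem_orbit_fixingSubgroup_of_dotProduct_pos ha neg_mem (by simpa))]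
    exact reflect
  · exact mem_orbit_fixingSubgroup_of_dotProduct_pos ha hb hpos

end OrthRoots

section Transitivity

variable {P K L : Finset (Fin 8 → ℝ)} {a b t : Fin 8 → ℝ} {k : ℕ}

theorem OrthSet.subset (hK : OrthSet k K) {m : ℕ} (hLK : L ⊆ K) (hL : #L = m) : OrthSet m L :=
  ⟨hL, fun e he => hK.2.1 e (hLK he), fun e he f hf => hK.2.2 e (hLK he) f (hLK hf)⟩

theorem OrthSet.insert_iff (hK : OrthSet k K) (ha : a ∉ K) :
    OrthSet (k + 1) (insert a K) ↔ a ∈ orthRoots K := by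
  constructor
  · intro h
    exact ⟨h.2.1 a (mem_insert_self a K), fun p hp =>
      h.2.2 p (mem_insert_of_mem hp) a (mem_insert_self a K) (ne_of_mem_of_not_mem hp ha)⟩
  · intro h
    refine ⟨by rw [card_insert_of_notMem ha, hK.1], forall_mem_insert _ _ _ |>.2 ⟨h.1, hK.2.1⟩, ?_⟩
    intro e he f hf hef
    rcases mem_insert.1 he with rfl | heK <;> rcases mem_insert.1 hf with rfl | hfK
    · exact absurd rfl hef
    · exact (dotProduct_comm _ _).trans (h.2 f hfK)
    · exact h.2 e heK
    · exact hK.2.2 e heK f hfK hef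

/-- A root `t` orthogonal to `P` is a hub of the roots orthogonal to `P` if those of them that are
not orthogonal to `t` span, together with `P`, the whole space. Every other root orthogonal to `P`
is then non-orthogonal to one that is itself non-orthogonal to `t`. -/
def IsHub (P : Finset (Fin 8 → ℝ)) (t : Fin 8 → ℝ) : Prop :=
  t ∈ orthRoots P ∧ ∀ x : Fin 8 → ℝ, (∀ p ∈ P, p ⬝ᵥ x = 0) →
    (∀ c ∈ orthRoots P, c ⬝ᵥ t ≠ 0 → c ⬝ᵥ x = 0) → x = 0

theorem IsHub.mem_orbit_fixingSubgroup (ht : IsHub P t) (ha : a ∈ orthRoots P) :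
    t ∈ orbit (fixingSubgroup weylGroup (P : Set (Fin 8 → ℝ))) a := by
  obtain ⟨c, hc, hct, hca⟩ : ∃ c ∈ orthRoots P, c ⬝ᵥ t ≠ 0 ∧ c ⬝ᵥ a ≠ 0 := by
    by_contra! h
    exact ha.1.ne_zero (ht.2 a ha.2 h)
  have c_mem := mem_orbit_fixingSubgroup_of_dotProduct_ne_zero ha hc (dotProduct_comm a c ▸ hca)
  exact orbit_eq_iff.2 c_mem ▸ mem_orbit_fixingSubgroup_of_dotProduct_ne_zero hc ht.1 hct

theorem insert_mem_orbit_insert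
    (h : b ∈ orbit (fixingSubgroup weylGroup (P : Set (Fin 8 → ℝ))) a) :
    insert b P ∈ orbit weylGroup (insert a P) := by
  obtain ⟨w, rfl⟩ := h
  have w_smul : w.1 • P = P :=
    (Finset.image_congr ((mem_fixingSubgroup_iff _).1 w.2)).trans image_id
  refine ⟨w.1, ?_⟩
  change w.1 • insert a P = insert (w.1 • a) P
  rw [smul_finset_insert, w_smul]

theorem OrthSet.exists_mem_orbit_insert (hP : {K | OrthSet k K} = orbit weylGroup P)
    (hK : OrthSet (k + 1) K) : ∃ a ∈ orthRoots P, K ∈ orbit weylGroup (insert a P) := by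
  obtain ⟨b, L, hb, rfl, hL⟩ := card_eq_succ.1 hK.1
  have L_orth : OrthSet k L := hK.subset (subset_insert b L) hL
  obtain ⟨w, rfl⟩ : L ∈ orbit weylGroup P := hP.subset L_orth
  refine ⟨w⁻¹ • b, ?_, w, ?_⟩
  · rw [← smul_mem_orthRoots_smul_iff w, smul_inv_smul]
    exact (L_orth.insert_iff hb).1 hK
  · change w • insert (w⁻¹ • b) P = insert b (w • P)
    rw [smul_finset_insert, smul_inv_smul]

theorem setOf_orthSet_succ_and_eq_orbit {Q : Finset (Fin 8 → ℝ) → Prop}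
    (hQ : ∀ (w : weylGroup) K, Q (w • K) ↔ Q K) (hP : {K | OrthSet k K} = orbit weylGroup P)
    (ht : t ∈ orthRoots P) (htQ : Q (insert t P))
    (htrans : ∀ a ∈ orthRoots P, Q (insert a P) → insert t P ∈ orbit weylGroup (insert a P)) :
    {K | OrthSet (k + 1) K ∧ Q K} = orbit weylGroup (insert t P) := by
  have P_orth : OrthSet k P := hP.superset (mem_orbit_self P)
  apply Set.Subset.antisymm
  · rintro K ⟨hK, hKQ⟩
    obtain ⟨a, ha, w, rfl⟩ := OrthSet.exists_mem_orbit_insert hP hK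
    rw [orbit_eq_iff.2 (htrans a ha ((hQ w _).1 hKQ))]
    exact mem_orbit _ w
  · rintro _ ⟨w, rfl⟩
    exact ⟨((P_orth.insert_iff (notMem_of_mem_orthRoots ht)).2 ht).smul w, (hQ w _).2 htQ⟩

theorem IsHub.setOf_orthSet_succ_eq_orbit (ht : IsHub P t)
    (hP : {K | OrthSet k K} = orbit weylGroup P) :
    {K | OrthSet (k + 1) K} = orbit weylGroup (insert t P) := by
  simpa only [and_true] using setOf_orthSet_succ_and_eq_orbit (Q := fun _ => True)
    (fun _ _ => Iff.rfl) hP ht.1 trivial fun a ha _ =>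
      insert_mem_orbit_insert (ht.mem_orbit_fixingSubgroup ha)

end Transitivity

section Frame

variable {P : Finset (Fin 8 → ℝ)} {a t x : Fin 8 → ℝ}

theorem coord_eq_zero_of_forall_orthRoots {i j : Fin 8}
    (hx : ∀ c ∈ orthRoots P, c ⬝ᵥ t ≠ 0 → c ⬝ᵥ x = 0) (hP : ∀ p ∈ P, p i = 0 ∧ p j = 0)
    (ht : t i ^ 2 ≠ t j ^ 2) : x i = 0 ∧ x j = 0 := by
  have hij : i ≠ j := by rintro rfl; exact ht rfl
  rw [Ne, sq_eq_sq_iff_eq_or_eq_neg, not_or, ← sub_eq_zero, ← add_eq_zero_iff_eq_neg] at ht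
  have add_eq : addRoot i j ⬝ᵥ x = 0 := by
    refine hx _ ⟨isRoot_addRoot hij, fun p hp => ?_⟩ (by rw [addRoot_dotProduct]; exact ht.2)
    rw [dotProduct_comm, addRoot_dotProduct, (hP p hp).1, (hP p hp).2, add_zero]
  have sub_eq : subRoot i j ⬝ᵥ x = 0 := by
    refine hx _ ⟨isRoot_subRoot hij, fun p hp => ?_⟩ (by rw [subRoot_dotProduct]; exact ht.1)
    rw [dotProduct_comm, subRoot_dotProduct, (hP p hp).1, (hP p hp).2, sub_zero]
  rw [addRoot_dotProduct] at add_eq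
  rw [subRoot_dotProduct] at sub_eq
  constructor <;> linarith

/-- The first root of the standard frame `e₀ + e₁, e₀ - e₁, e₂ + e₃, …`. -/
def orthSingleton : Finset (Fin 8 → ℝ) := insert (addRoot 0 1) ∅

/-- The first two roots of the standard frame. -/
def orthPair : Finset (Fin 8 → ℝ) := insert (subRoot 0 1) orthSingleton

/-- The first three roots of the standard frame. -/
def orthTriple : Finset (Fin 8 → ℝ) := insert (addRoot 2 3) orthPair

/-- The first four roots of the standard frame. Their sum `2 (e₀ + e₂)` is in `2Λ`. -/
def evenQuadruple : Finset (Fin 8 → ℝ) := insert (subRoot 2 3) orthTriple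

/-- The first three roots of the standard frame and `e₄ + e₅`. Their sum is not in `2Λ`. -/
def oddQuadruple : Finset (Fin 8 → ℝ) := insert (addRoot 4 5) orthTriple

theorem forall_orthSingleton_dotProduct_eq_zero_iff :
    (∀ p ∈ orthSingleton, p ⬝ᵥ x = 0) ↔ x 0 + x 1 = 0 := by
  simp [orthSingleton, addRoot_dotProduct]

theorem forall_orthPair_dotProduct_eq_zero_iff :
    (∀ p ∈ orthPair, p ⬝ᵥ x = 0) ↔ x 0 = 0 ∧ x 1 = 0 := by
  rw [orthPair, forall_mem_insert, forall_orthSingleton_dotProduct_eq_zero_iff, subRoot_dotProduct]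
  grind

theorem forall_orthTriple_dotProduct_eq_zero_iff :
    (∀ p ∈ orthTriple, p ⬝ᵥ x = 0) ↔ x 2 + x 3 = 0 ∧ x 0 = 0 ∧ x 1 = 0 := by
  rw [orthTriple, forall_mem_insert, forall_orthPair_dotProduct_eq_zero_iff, addRoot_dotProduct]

theorem forall_evenQuadruple_dotProduct_eq_zero_iff :
    (∀ p ∈ evenQuadruple, p ⬝ᵥ x = 0) ↔ x 2 = 0 ∧ x 3 = 0 ∧ x 0 = 0 ∧ x 1 = 0 := by
  rw [evenQuadruple, forall_mem_insert, forall_orthTriple_dotProduct_eq_zero_iff,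
    subRoot_dotProduct]
  grind

theorem isHub_empty : IsHub ∅ (addRoot 0 1) := by
  refine ⟨⟨isRoot_addRoot zero_ne_one, by simp⟩, fun x _ hx => ?_⟩
  have coord_eq {i j : Fin 8} (h : addRoot 0 1 i ^ 2 ≠ addRoot 0 1 j ^ 2) : x i = 0 ∧ x j = 0 :=
    coord_eq_zero_of_forall_orthRoots hx (by simp) h
  funext i
  by_cases hi : i = 0 ∨ i = 1
  · exact (coord_eq (i := i) (j := 2) (by rcases hi with rfl | rfl <;> simp [addRoot])).1
  · exact (coord_eq (i := 0) (by simp [addRoot, not_or.1 hi])).2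

theorem isHub_orthSingleton : IsHub orthSingleton (subRoot 0 1) := by
  have sub_mem : subRoot 0 1 ∈ orthRoots orthSingleton :=
    ⟨isRoot_subRoot zero_ne_one,
      forall_orthSingleton_dotProduct_eq_zero_iff.2 (by simp [subRoot])⟩
  refine ⟨sub_mem, fun x hP hx => ?_⟩
  rw [forall_orthSingleton_dotProduct_eq_zero_iff] at hP
  have sub_eq : subRoot 0 1 ⬝ᵥ x = 0 :=
    hx _ sub_mem (by rw [sub_mem.1.dotProduct_self]; exact two_ne_zero)
  have half_eq (j : Fin 8) (hj : j ≠ 0 ∧ j ≠ 1) : (halfRoot - addRoot 1 j) ⬝ᵥ x = 0 := by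
    refine hx _ ⟨isRoot_halfRoot_sub_addRoot hj.2.symm,
      forall_orthSingleton_dotProduct_eq_zero_iff.2 ?_⟩ ?_
    · norm_num [addRoot, halfRoot, hj]
    · rw [dotProduct_comm, subRoot_dotProduct]
      norm_num [addRoot, halfRoot, hj]
  simp only [subRoot_dotProduct, sub_dotProduct, halfRoot_dotProduct, addRoot_dotProduct,
    Fin.sum_univ_eight] at sub_eq half_eq
  have half₂ := half_eq 2 (by decide)
  have half₃ := half_eq 3 (by decide)
  have half₄ := half_eq 4 (by decide)
  have half₅ := half_eq 5 (by decide)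
  have half₆ := half_eq 6 (by decide)
  have half₇ := half_eq 7 (by decide)
  funext i
  fin_cases i <;> dsimp <;> linarith

theorem isHub_orthPair : IsHub orthPair (addRoot 2 3) := by
  refine ⟨⟨isRoot_addRoot (by decide),
    forall_orthPair_dotProduct_eq_zero_iff.2 (by simp [addRoot])⟩, fun x hP hx => ?_⟩
  rw [forall_orthPair_dotProduct_eq_zero_iff] at hP
  have coord_eq (i j : Fin 8) := coord_eq_zero_of_forall_orthRoots (i := i) (j := j) hx
  simp only [orthPair, orthSingleton, forall_mem_insert, addRoot, subRoot] at coord_eq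
  have h₂₄ := coord_eq 2 4 (by simp) (by simp)
  have h₃₅ := coord_eq 3 5 (by simp) (by simp)
  have h₃₆ := coord_eq 3 6 (by simp) (by simp)
  have h₃₇ := coord_eq 3 7 (by simp) (by simp)
  funext i
  fin_cases i <;> simp [*]

theorem isHub_evenQuadruple : IsHub evenQuadruple (addRoot 4 5) := by
  refine ⟨⟨isRoot_addRoot (by decide),
    forall_evenQuadruple_dotProduct_eq_zero_iff.2 (by simp [addRoot])⟩, fun x hP hx => ?_⟩
  rw [forall_evenQuadruple_dotProduct_eq_zero_iff] at hP
  have coord_eq (i j : Fin 8) := coord_eq_zero_of_forall_orthRoots (i := i) (j := j) hx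
  simp only [evenQuadruple, orthTriple, orthPair, orthSingleton, forall_mem_insert, addRoot,
    subRoot] at coord_eq
  have h₄₆ := coord_eq 4 6 (by simp) (by simp)
  have h₅₇ := coord_eq 5 7 (by simp) (by simp)
  funext i
  fin_cases i <;> simp [*]

theorem setOf_orthSet_zero : {K | OrthSet 0 K} = {∅} := by
  ext K
  exact ⟨fun hK => card_eq_zero.1 hK.1, by rintro rfl; exact ⟨rfl, by simp, by simp⟩⟩

theorem setOf_orthSet_zero_eq_orbit :
    {K | OrthSet 0 K} = orbit weylGroup (∅ : Finset (Fin 8 → ℝ)) := by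
  rw [setOf_orthSet_zero]
  ext K
  constructor
  · rintro rfl
    exact mem_orbit_self _
  · rintro ⟨w, rfl⟩
    exact smul_finset_empty w

theorem setOf_orthSet_one : {K | OrthSet 1 K} = orbit weylGroup orthSingleton :=
  isHub_empty.setOf_orthSet_succ_eq_orbit setOf_orthSet_zero_eq_orbit

theorem setOf_orthSet_two : {K | OrthSet 2 K} = orbit weylGroup orthPair :=
  isHub_orthSingleton.setOf_orthSet_succ_eq_orbit setOf_orthSet_one

theorem setOf_orthSet_three : {K | OrthSet 3 K} = orbit weylGroup orthTriple :=
  isHub_orthPair.setOf_orthSet_succ_eq_orbit setOf_orthSet_two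

theorem mem_orthRoots_orthTriple_iff :
    a ∈ orthRoots orthTriple ↔ isRoot a ∧ a 2 + a 3 = 0 ∧ a 0 = 0 ∧ a 1 = 0 :=
  and_congr_right' forall_orthTriple_dotProduct_eq_zero_iff

theorem sum_insert_orthTriple (ha : a ∈ orthRoots orthTriple) :
    ∑ e ∈ insert a orthTriple, e = a + addRoot 2 3 + (2 : ℝ) • Pi.single 0 1 := by
  have pair_notMem : addRoot 2 3 ∉ orthPair := notMem_of_mem_orthRoots isHub_orthPair.1
  have single_notMem : subRoot 0 1 ∉ orthSingleton := notMem_of_mem_orthRoots isHub_orthSingleton.1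
  rw [sum_insert (notMem_of_mem_orthRoots ha), orthTriple, sum_insert pair_notMem, orthPair,
    sum_insert single_notMem, orthSingleton, insert_empty, sum_singleton, addRoot, addRoot, subRoot]
  module

theorem subRoot_mem_orthRoots_orthTriple : subRoot 2 3 ∈ orthRoots orthTriple :=
  mem_orthRoots_orthTriple_iff.2 ⟨isRoot_subRoot (by decide), by simp [subRoot]⟩

theorem addRoot_mem_orthRoots_orthTriple : addRoot 4 5 ∈ orthRoots orthTriple :=
  mem_orthRoots_orthTriple_iff.2 ⟨isRoot_addRoot (by decide), by simp [addRoot]⟩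

theorem sumInTwoLambda_evenQuadruple : SumInTwoLambda evenQuadruple := by
  refine ⟨addRoot 0 2, (isRoot_addRoot (by decide)).1, ?_⟩
  rw [evenQuadruple, sum_insert_orthTriple subRoot_mem_orthRoots_orthTriple, subRoot, addRoot,
    addRoot]
  module

theorem not_sumInTwoLambda_oddQuadruple : ¬SumInTwoLambda oddQuadruple := by
  rintro ⟨x, hx, hsum⟩
  rw [oddQuadruple, sum_insert_orthTriple addRoot_mem_orthRoots_orthTriple] at hsum
  obtain ⟨n, hn⟩ := isRoot_halfRoot.1.exists_dotProduct_eq_intCast hx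
  have three_eq : (3 : ℝ) = 2 * n := by
    rw [← hn, ← smul_eq_mul, ← dotProduct_smul, ← hsum, dotProduct_add,
      dotProduct_add, dotProduct_comm, addRoot_dotProduct, dotProduct_comm, addRoot_dotProduct]
    norm_num [halfRoot]
  have : (3 : ℤ) = 2 * n := by exact_mod_cast three_eq
  omega

theorem evenQuadruple_mem_orbit_insert (ha : a ∈ orthRoots orthTriple) (h : a 2 ≠ a 3) :
    evenQuadruple ∈ orbit weylGroup (insert a orthTriple) :=
  insert_mem_orbit_insert <|
    mem_orbit_fixingSubgroup_of_dotProduct_ne_zero ha subRoot_mem_orthRoots_orthTriple <| by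
      rwa [dotProduct_comm, subRoot_dotProduct, sub_ne_zero]

theorem oddQuadruple_mem_orbit_insert (ha : a ∈ orthRoots orthTriple) (h : a 2 = a 3) :
    oddQuadruple ∈ orbit weylGroup (insert a orthTriple) := by
  have a_mem : a ∈ orthRoots evenQuadruple := ⟨ha.1, forall_mem_insert _ _ _ |>.2
    ⟨by rw [subRoot_dotProduct, h, sub_self], ha.2⟩⟩
  obtain ⟨⟨w, hw⟩, hwa⟩ := isHub_evenQuadruple.mem_orbit_fixingSubgroup a_mem
  exact insert_mem_orbit_insert
    ⟨⟨w, fixingSubgroup_antitone _ _ (coe_subset.2 (subset_insert _ _)) hw⟩, hwa⟩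

theorem sumInTwoLambda_insert_orthTriple_iff (ha : a ∈ orthRoots orthTriple) :
    SumInTwoLambda (insert a orthTriple) ↔ a 2 ≠ a 3 := by
  constructor
  · intro hsum h
    exact not_sumInTwoLambda_oddQuadruple
      ((sumInTwoLambda_iff_of_mem_orbit (oddQuadruple_mem_orbit_insert ha h)).2 hsum)
  · intro h
    exact (sumInTwoLambda_iff_of_mem_orbit (evenQuadruple_mem_orbit_insert ha h)).1
      sumInTwoLambda_evenQuadruple

theorem setOf_orthSet_four_sumInTwoLambda :
    {K | OrthSet 4 K ∧ SumInTwoLambda K} = orbit weylGroup evenQuadruple :=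
  setOf_orthSet_succ_and_eq_orbit sumInTwoLambda_smul_iff setOf_orthSet_three
    subRoot_mem_orthRoots_orthTriple sumInTwoLambda_evenQuadruple fun _ ha hsum =>
      evenQuadruple_mem_orbit_insert ha ((sumInTwoLambda_insert_orthTriple_iff ha).1 hsum)

theorem setOf_orthSet_four_not_sumInTwoLambda :
    {K | OrthSet 4 K ∧ ¬SumInTwoLambda K} = orbit weylGroup oddQuadruple :=
  setOf_orthSet_succ_and_eq_orbit (fun w K => (sumInTwoLambda_smul_iff w K).not)
    setOf_orthSet_three addRoot_mem_orthRoots_orthTriple not_sumInTwoLambda_oddQuadruple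
      fun _ ha hsum => oddQuadruple_mem_orbit_insert ha
        (not_not.1 fun h => hsum ((sumInTwoLambda_insert_orthTriple_iff ha).2 h))

end Frame

section Counting

variable {P : Finset (Fin 8 → ℝ)} {Q : Finset (Fin 8 → ℝ) → Prop} {k : ℕ}

theorem finite_setOf_orthSet (k : ℕ) : {K | OrthSet k K}.Finite :=
  (finite_setOf_isRoot.toFinset.powerset.finite_toSet).subset fun K hK => by
    simpa [Set.subset_def] using hK.2.1

theorem orthRoots_smul_and_eq_smul (hQ : ∀ (w : weylGroup) K, Q (w • K) ↔ Q K) (w : weylGroup) :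
    {a | a ∈ orthRoots (w • P) ∧ Q (insert a (w • P))} =
      w • {a | a ∈ orthRoots P ∧ Q (insert a P)} := by
  ext a
  obtain ⟨b, rfl⟩ := MulAction.surjective w a
  rw [Set.smul_mem_smul_set_iff]
  refine and_congr (smul_mem_orthRoots_smul_iff w) ?_
  rw [← smul_finset_insert, hQ]

theorem ncard_setOf_orthSet_succ_and (hQ : ∀ (w : weylGroup) K, Q (w • K) ↔ Q K)
    (hP : {K | OrthSet k K} = orbit weylGroup P) :
    {K | OrthSet (k + 1) K ∧ Q K}.ncard =
      {K | OrthSet k K}.ncard * {a | a ∈ orthRoots P ∧ Q (insert a P)}.ncard / (k + 1) := by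
  refine Nat.eq_div_of_mul_eq_left k.succ_ne_zero (Eq.symm ?_)
  refine ncard_mul_eq_ncard_mul_succ (finite_setOf_orthSet k)
    ((finite_setOf_orthSet (k + 1)).subset fun _ h => h.1) (fun K hK => hK.1) (fun L hL => hL.1.1)
    (fun L hL K hKL hK => hL.1.subset hKL hK) fun K hK => ?_
  obtain ⟨w, (rfl : w • P = K)⟩ := hP.subset hK
  rw [← Set.ncard_smul_set w {a | a ∈ orthRoots P ∧ Q (insert a P)},
    ← orthRoots_smul_and_eq_smul hQ]
  congr 1
  ext a
  constructor
  · rintro ⟨ha, h, hQa⟩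
    exact ⟨(OrthSet.insert_iff hK ha).1 h, hQa⟩
  · rintro ⟨ha, hQa⟩
    have ha' := notMem_of_mem_orthRoots ha
    exact ⟨ha', (OrthSet.insert_iff hK ha').2 ha, hQa⟩

theorem ncard_setOf_orthSet_succ (hP : {K | OrthSet k K} = orbit weylGroup P) :
    {K | OrthSet (k + 1) K}.ncard =
      {K | OrthSet k K}.ncard * (orthRoots P).ncard / (k + 1) := by
  simpa only [and_true] using!
    ncard_setOf_orthSet_succ_and (Q := fun _ => True) (fun _ _ => Iff.rfl) hP

theorem ncard_orthRoots_empty : (orthRoots ∅).ncard = 240 := by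
  rw [orthRoots, ncard_setOf_isRoot_and (q := fun _ => True) (by simp)]
  decide +kernel

theorem ncard_orthRoots_orthSingleton : (orthRoots orthSingleton).ncard = 126 := by
  rw [orthRoots, ncard_setOf_isRoot_and (q := fun v => v 0 + v 1 = 0) fun v => by
    rw [forall_orthSingleton_dotProduct_eq_zero_iff, halve_apply_add_halve_apply_eq_zero_iff]]
  decide +kernel

theorem ncard_orthRoots_orthPair : (orthRoots orthPair).ncard = 60 := by
  rw [orthRoots, ncard_setOf_isRoot_and (q := fun v => v 0 = 0 ∧ v 1 = 0) fun v => by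
    simp only [forall_orthPair_dotProduct_eq_zero_iff, halve_apply_eq_zero_iff]]
  decide +kernel

theorem ncard_orthRoots_orthTriple : (orthRoots orthTriple).ncard = 26 := by
  rw [orthRoots, ncard_setOf_isRoot_and
    (q := fun v => v 2 + v 3 = 0 ∧ v 0 = 0 ∧ v 1 = 0) fun v => by
      simp only [forall_orthTriple_dotProduct_eq_zero_iff, halve_apply_eq_zero_iff,
        halve_apply_add_halve_apply_eq_zero_iff]]
  decide +kernel

theorem ncard_orthRoots_orthTriple_sumInTwoLambda :
    {a | a ∈ orthRoots orthTriple ∧ SumInTwoLambda (insert a orthTriple)}.ncard = 2 := by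
  have setOf_eq : {a | a ∈ orthRoots orthTriple ∧ SumInTwoLambda (insert a orthTriple)} =
      {a | isRoot a ∧ (a 2 + a 3 = 0 ∧ a 0 = 0 ∧ a 1 = 0) ∧ a 2 ≠ a 3} := Set.ext fun a =>
    (and_congr_right sumInTwoLambda_insert_orthTriple_iff).trans
      (by rw [mem_orthRoots_orthTriple_iff, and_assoc]; rfl)
  rw [setOf_eq, ncard_setOf_isRoot_and
    (q := fun v => (v 2 + v 3 = 0 ∧ v 0 = 0 ∧ v 1 = 0) ∧ v 2 ≠ v 3) fun v => by
      simp only [halve_apply_eq_zero_iff, halve_apply_add_halve_apply_eq_zero_iff, ne_eq,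
        halve_apply_eq_halve_apply_iff]]
  decide +kernel

theorem ncard_orthRoots_orthTriple_not_sumInTwoLambda :
    {a | a ∈ orthRoots orthTriple ∧ ¬SumInTwoLambda (insert a orthTriple)}.ncard = 24 := by
  have split : {a | a ∈ orthRoots orthTriple ∧ SumInTwoLambda (insert a orthTriple)}.ncard +
      {a | a ∈ orthRoots orthTriple ∧ ¬SumInTwoLambda (insert a orthTriple)}.ncard =
        (orthRoots orthTriple).ncard :=
    Set.ncard_inter_add_ncard_sdiff_eq_ncard (orthRoots orthTriple)
      {a | SumInTwoLambda (insert a orthTriple)} (finite_setOf_isRoot.subset fun _ h => h.1)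
  rw [ncard_orthRoots_orthTriple_sumInTwoLambda, ncard_orthRoots_orthTriple] at split
  omega

theorem ncard_setOf_orthSet_one : {K | OrthSet 1 K}.ncard = 240 :=
  (ncard_setOf_orthSet_succ setOf_orthSet_zero_eq_orbit).trans
    (by rw [setOf_orthSet_zero, Set.ncard_singleton, ncard_orthRoots_empty])

theorem ncard_setOf_orthSet_two : {K | OrthSet 2 K}.ncard = 15120 :=
  (ncard_setOf_orthSet_succ setOf_orthSet_one).trans
    (by rw [ncard_setOf_orthSet_one, ncard_orthRoots_orthSingleton])

theorem ncard_setOf_orthSet_three : {K | OrthSet 3 K}.ncard = 302400 :=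
  (ncard_setOf_orthSet_succ setOf_orthSet_two).trans
    (by rw [ncard_setOf_orthSet_two, ncard_orthRoots_orthPair])

theorem ncard_setOf_orthSet_four : {K | OrthSet 4 K}.ncard = 1965600 :=
  (ncard_setOf_orthSet_succ setOf_orthSet_three).trans
    (by rw [ncard_setOf_orthSet_three, ncard_orthRoots_orthTriple])

theorem ncard_setOf_orthSet_four_sumInTwoLambda :
    {K | OrthSet 4 K ∧ SumInTwoLambda K}.ncard = 151200 :=
  (ncard_setOf_orthSet_succ_and sumInTwoLambda_smul_iff setOf_orthSet_three).trans
    (by rw [ncard_setOf_orthSet_three, ncard_orthRoots_orthTriple_sumInTwoLambda])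

theorem ncard_setOf_orthSet_four_not_sumInTwoLambda :
    {K | OrthSet 4 K ∧ ¬SumInTwoLambda K}.ncard = 1814400 :=
  (ncard_setOf_orthSet_succ_and (fun w K => (sumInTwoLambda_smul_iff w K).not)
    setOf_orthSet_three).trans
      (by rw [ncard_setOf_orthSet_three, ncard_orthRoots_orthTriple_not_sumInTwoLambda])

end Counting

theorem exists_isWeyl_image_eq_of_setOf_eq_orbit {p : Finset (Fin 8 → ℝ) → Prop}
    {P K L : Finset (Fin 8 → ℝ)} (hp : {K | p K} = orbit weylGroup P) (hK : p K) (hL : p L) :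
    ∃ w : (Fin 8 → ℝ) ≃ₗ[ℝ] (Fin 8 → ℝ), IsWeyl w ∧ ⇑w '' (K : Set (Fin 8 → ℝ)) = L := by
  rw [exists_isWeyl_image_eq_iff, orbit_eq_iff.2 (hp.subset hK)]
  exact hp.subset hL

/-- (i) There are exactly 15120 two-element sets of pairwise
orthogonal roots and `W` acts transitively on them; (ii) there are exactly 302400
three-element such sets and `W` acts transitively on them; (iii) there are exactly
1965600 four-element such sets, forming exactly two `W`-orbits: one of size 151200
(sets whose elements sum to a vector in `2Λ`) and one of size 1814400 (sets whose
elements sum to a vector not in `2Λ`). -/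
theorem stmt_13 :
    ({K : Finset (Fin 8 → ℝ) | OrthSet 2 K}.ncard = 15120 ∧
      ∀ K1 K2 : Finset (Fin 8 → ℝ), OrthSet 2 K1 → OrthSet 2 K2 →
        ∃ w : (Fin 8 → ℝ) ≃ₗ[ℝ] (Fin 8 → ℝ), IsWeyl w ∧
          ⇑w '' (K1 : Set (Fin 8 → ℝ)) = (K2 : Set (Fin 8 → ℝ))) ∧
    ({K : Finset (Fin 8 → ℝ) | OrthSet 3 K}.ncard = 302400 ∧
      ∀ K1 K2 : Finset (Fin 8 → ℝ), OrthSet 3 K1 → OrthSet 3 K2 →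
        ∃ w : (Fin 8 → ℝ) ≃ₗ[ℝ] (Fin 8 → ℝ), IsWeyl w ∧
          ⇑w '' (K1 : Set (Fin 8 → ℝ)) = (K2 : Set (Fin 8 → ℝ))) ∧
    ({K : Finset (Fin 8 → ℝ) | OrthSet 4 K}.ncard = 1965600 ∧
      {K : Finset (Fin 8 → ℝ) | OrthSet 4 K ∧ SumInTwoLambda K}.ncard = 151200 ∧
      {K : Finset (Fin 8 → ℝ) | OrthSet 4 K ∧ ¬SumInTwoLambda K}.ncard = 1814400 ∧
      ∀ K1 K2 : Finset (Fin 8 → ℝ), OrthSet 4 K1 → OrthSet 4 K2 →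
        ((∃ w : (Fin 8 → ℝ) ≃ₗ[ℝ] (Fin 8 → ℝ), IsWeyl w ∧
            ⇑w '' (K1 : Set (Fin 8 → ℝ)) = (K2 : Set (Fin 8 → ℝ))) ↔
          (SumInTwoLambda K1 ↔ SumInTwoLambda K2))) := by
  refine ⟨⟨ncard_setOf_orthSet_two, fun _ _ =>
      exists_isWeyl_image_eq_of_setOf_eq_orbit setOf_orthSet_two⟩,
    ⟨ncard_setOf_orthSet_three, fun _ _ =>
      exists_isWeyl_image_eq_of_setOf_eq_orbit setOf_orthSet_three⟩,
    ncard_setOf_orthSet_four, ncard_setOf_orthSet_four_sumInTwoLambda,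
    ncard_setOf_orthSet_four_not_sumInTwoLambda, fun K L hK hL => ⟨fun h => ?_, fun h => ?_⟩⟩
  · exact (sumInTwoLambda_iff_of_mem_orbit (exists_isWeyl_image_eq_iff.1 h)).symm
  · by_cases hsum : SumInTwoLambda K
    · exact exists_isWeyl_image_eq_of_setOf_eq_orbit setOf_orthSet_four_sumInTwoLambda
        ⟨hK, hsum⟩ ⟨hL, h.1 hsum⟩
    · exact exists_isWeyl_image_eq_of_setOf_eq_orbit setOf_orthSet_four_not_sumInTwoLambda
        ⟨hK, hsum⟩ ⟨hL, mt h.2 hsum⟩
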